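/- Let ABCD be a convex cyclic orthodiagonal quadrilateral in the Euclidean plane: dist E A = dist E B = dist E C = dist E D = r > 0 for its circumcenter E, the open segments AC and BD intersect, and ⟪C - A, D - B⟫ = 0. Assume each of the triples (A,B,E), (B,C,E), (C,D,E), (D,A,E) is affinely independent, and let F, G, H, I be the circumcenters of the radial triangles ABE, BCE, CDE, DAE respectively. Then FGHI is bicentric: F, G, H, I are concyclic, and the distance from E to each of the four lines FG, GH, HI, IF equals r/2 (so FGHI is tangential with incenter E). -/

import Mathlib

/-!
Put the origin at `E`, and write `a, b, c, d, p` for the positions of `A, B, C, D` and of the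
intersection `P` of the diagonals.

*Tangency.* A point `x` is equidistant from `E` and `B` iff `2 ⟪x, b⟫ = r ^ 2`. Both `F` and `G` lie
on this line, which is at distance `r / 2` from `E` because `‖b‖ = r`; so it is the line `FG` as
soon as `F ≠ G` (`infDist_side`). If `F = G`, the circle about `F` through `E` would meet the circle
about `E` in the three distinct points `A, B, C`, which is impossible (`circumcenters_ne`). The other
three sides are treated in the same way.

*Concyclicity.* Since the diagonals are perpendicular, `⟪p - a, p - b⟫ = 0`. The circumcenter `f` of
`EAB` is `λ • (a + b)` with `λ * (r ^ 2 + ⟪a, b⟫) = r ^ 2 / 2`, and from these two relations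
`‖f‖ ^ 2 * (‖p‖ ^ 2 - r ^ 2) - r ^ 2 * ⟪f, p⟫ + r ^ 4 / 2 = 0` (`circle_equation`).
The coefficients depend only on `p` and `r`, and `‖p‖ < r` as `P` is interior to a chord, so this is
the equation of one circle containing all four circumcenters. Its center is
`(r ^ 2 / (2 * (‖p‖ ^ 2 - r ^ 2))) • p` (`dist_sq_center`).
-/

open scoped RealInnerProductSpace

lemma dist_sq_coord (x y : EuclideanSpace ℝ (Fin 2)) :
    dist x y ^ 2 = (x 0 - y 0) ^ 2 + (x 1 - y 1) ^ 2 := by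
  rw [EuclideanSpace.dist_eq, Real.sq_sqrt (by positivity), Fin.sum_univ_two, Real.dist_eq,
    Real.dist_eq, sq_abs, sq_abs]

/-- A point equidistant from `E` and `B` lies on the perpendicular bisector of `EB`, written as the
line `2 ⟪F - E, B - E⟫ = r ^ 2`. -/
lemma bisector_equation {E B F : EuclideanSpace ℝ (Fin 2)} {r : ℝ} (hEB : dist E B = r)
    (hF : dist F B = dist F E) :
    2 * ((F 0 - E 0) * (B 0 - E 0) + (F 1 - E 1) * (B 1 - E 1)) = r ^ 2 := by
  have h1 := dist_sq_coord E B
  have h2 := dist_sq_coord F B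
  have h3 := dist_sq_coord F E
  rw [hEB] at h1
  rw [hF] at h2
  linear_combination -h1 + h2 - h3

/-- The line through two distinct points of the perpendicular bisector of `EB` passes through the
midpoint of `EB`, which is its nearest point to `E`. -/
lemma infDist_side {E B F G : EuclideanSpace ℝ (Fin 2)} {r : ℝ} (hr : 0 < r) (hEB : dist E B = r)
    (hF : dist F B = dist F E) (hG : dist G B = dist G E) (hFG : F ≠ G) :
    Metric.infDist E (affineSpan ℝ ({F, G} : Set (EuclideanSpace ℝ (Fin 2))) :
        Set (EuclideanSpace ℝ (Fin 2))) = r / 2 := by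
  have hb := dist_sq_coord E B
  rw [hEB] at hb
  have f := bisector_equation hEB hF
  have g := bisector_equation hEB hG
  -- `r ^ 2` times the coordinate of `G - F` along the quarter turn of `B - E`.
  set μ := (G 1 - F 1) * (B 0 - E 0) - (G 0 - F 0) * (B 1 - E 1) with hμ
  -- The same coordinate of `midpoint E B - F`.
  set ν := ((B 1 + E 1) / 2 - F 1) * (B 0 - E 0) - ((B 0 + E 0) / 2 - F 0) * (B 1 - E 1) with hν
  have g0 : (G 0 - F 0) * r ^ 2 = -μ * (B 1 - E 1) := by
    rw [hμ]; linear_combination (G 0 - F 0) * hb + (B 0 - E 0) / 2 * (g - f)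
  have g1 : (G 1 - F 1) * r ^ 2 = μ * (B 0 - E 0) := by
    rw [hμ]; linear_combination (G 1 - F 1) * hb + (B 1 - E 1) / 2 * (g - f)
  have m0 : ((B 0 + E 0) / 2 - F 0) * r ^ 2 = -ν * (B 1 - E 1) := by
    rw [hν]; linear_combination -(F 0 - E 0) * hb - (B 0 - E 0) / 2 * f
  have m1 : ((B 1 + E 1) / 2 - F 1) * r ^ 2 = ν * (B 0 - E 0) := by
    rw [hν]; linear_combination -(F 1 - E 1) * hb - (B 1 - E 1) / 2 * f
  have hr2 : r ^ 2 ≠ 0 := by positivity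
  have hμ0 : μ ≠ 0 := by
    intro h0
    rw [h0] at g0 g1
    have e0 : G 0 - F 0 = 0 := by simpa [hr.ne'] using g0
    have e1 : G 1 - F 1 = 0 := by simpa [hr.ne'] using g1
    apply hFG
    ext i
    fin_cases i
    · simp; linarith
    · simp; linarith
  have hmem : AffineMap.lineMap F G (ν / μ) ∈ affineSpan ℝ ({F, G} : Set _) :=
    AffineMap.lineMap_mem_affineSpan_pair _ _ _
  have hdist : dist E (AffineMap.lineMap F G (ν / μ)) = r / 2 := by
    have hνμ : ν / μ * μ = ν := div_mul_cancel₀ _ hμ0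
    have c0 : (AffineMap.lineMap F G (ν / μ) : EuclideanSpace ℝ (Fin 2)) 0 = (B 0 + E 0) / 2 := by
      simp only [AffineMap.lineMap_apply, vsub_eq_sub, vadd_eq_add, PiLp.add_apply,
        PiLp.smul_apply, PiLp.sub_apply, smul_eq_mul]
      apply mul_right_cancel₀ hr2
      linear_combination ν / μ * g0 - m0 - (B 1 - E 1) * hνμ
    have c1 : (AffineMap.lineMap F G (ν / μ) : EuclideanSpace ℝ (Fin 2)) 1 = (B 1 + E 1) / 2 := by
      simp only [AffineMap.lineMap_apply, vsub_eq_sub, vadd_eq_add, PiLp.add_apply,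
        PiLp.smul_apply, PiLp.sub_apply, smul_eq_mul]
      apply mul_right_cancel₀ hr2
      linear_combination ν / μ * g1 - m1 + (B 0 - E 0) * hνμ
    refine (sq_eq_sq₀ dist_nonneg (by positivity)).1 ?_
    rw [dist_sq_coord, c0, c1]
    linear_combination -hb / 4
  apply le_antisymm
  · rw [← hdist]
    exact Metric.infDist_le_dist_of_mem hmem
  · refine (Metric.le_infDist ⟨_, hmem⟩).2 ?_
    intro x hx
    obtain ⟨t, rfl⟩ := mem_affineSpan_pair_iff_exists_lineMap_eq.1 hx
    refine (sq_le_sq₀ (by positivity) dist_nonneg).1 ?_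
    rw [dist_sq_coord]
    simp only [AffineMap.lineMap_apply, vsub_eq_sub, vadd_eq_add, PiLp.add_apply,
        PiLp.smul_apply, PiLp.sub_apply, smul_eq_mul]
    set x0 := t * (G 0 - F 0) + F 0 with hx0
    set x1 := t * (G 1 - F 1) + F 1 with hx1
    have hx : 2 * ((x0 - E 0) * (B 0 - E 0) + (x1 - E 1) * (B 1 - E 1)) = r ^ 2 := by
      rw [hx0, hx1]; linear_combination t * g + (1 - t) * f
    -- Equivalent to `0 ≤ ‖x - midpoint E B‖ ^ 2`, since `x` lies on the bisector of `EB`.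
    nlinarith [sq_nonneg (x0 - E 0 - (B 0 - E 0) / 2), sq_nonneg (x1 - E 1 - (B 1 - E 1) / 2)]

/-- Two circumcenters of adjacent radial triangles differ: two distinct circles share at most two
points. -/
lemma circumcenters_ne {E A B C F G : EuclideanSpace ℝ (Fin 2)} {r : ℝ} (hr : 0 < r)
    (hEA : dist E A = r) (hEB : dist E B = r) (hEC : dist E C = r)
    (hAB : A ≠ B) (hBC : B ≠ C) (hAC : A ≠ C)
    (hFA : dist F A = dist F E) (hFB : dist F B = dist F E) (hGC : dist G C = dist G E) :
    F ≠ G := by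
  rintro rfl
  have hEF : E ≠ F := by
    rintro rfl
    rw [dist_self] at hFA
    exact hr.ne' (hEA.symm.trans hFA)
  rcases EuclideanGeometry.eq_of_dist_eq_of_dist_eq_of_finrank_eq_two (by simp) hEF hAB
    ((dist_comm _ _).trans hEA) ((dist_comm _ _).trans hEB) ((dist_comm _ _).trans hEC)
    ((dist_comm _ _).trans hFA) ((dist_comm _ _).trans hFB) ((dist_comm _ _).trans hGC) with h | h
  · exact hAC h.symm
  · exact hBC h.symm

/-- In coordinates centred at `E`: the circumcenter `f` of `E`, `a`, `b` satisfies an equation that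
depends only on `p` and `r`, whenever `p` sees `a` and `b` under a right angle. -/
lemma circle_equation {a0 a1 b0 b1 f0 f1 p0 p1 r : ℝ} (ha : a0 ^ 2 + a1 ^ 2 = r ^ 2)
    (hb : b0 ^ 2 + b1 ^ 2 = r ^ 2) (hab : a0 ≠ b0 ∨ a1 ≠ b1)
    (hfa : 2 * (f0 * a0 + f1 * a1) = r ^ 2) (hfb : 2 * (f0 * b0 + f1 * b1) = r ^ 2) (hr : 0 < r)
    (hp : (p0 - a0) * (p0 - b0) + (p1 - a1) * (p1 - b1) = 0) :
    (f0 ^ 2 + f1 ^ 2) * (p0 ^ 2 + p1 ^ 2 - r ^ 2) - r ^ 2 * (f0 * p0 + f1 * p1) + r ^ 4 / 2 = 0 := by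
  have hpos : (a0 - b0) ^ 2 + (a1 - b1) ^ 2 ≠ 0 := by
    intro h
    rcases hab with h' | h'
    · exact h' (by nlinarith [sq_nonneg (a0 - b0), sq_nonneg (a1 - b1)])
    · exact h' (by nlinarith [sq_nonneg (a0 - b0), sq_nonneg (a1 - b1)])
  -- Both `f` and `a + b` are orthogonal to `a - b`, hence parallel.
  have hpar : f0 * (a1 + b1) = f1 * (a0 + b0) := by
    have hf : f0 * (a0 - b0) + f1 * (a1 - b1) = 0 := by linarith
    have hs : (a0 + b0) * (a0 - b0) + (a1 + b1) * (a1 - b1) = 0 := by linarith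
    rcases eq_or_ne a0 b0 with h | h
    · have h1 : a1 - b1 ≠ 0 := by
        intro h1; apply hpos; rw [h, h1]; ring
      apply mul_right_cancel₀ h1
      linear_combination f0 * hs - (a0 + b0) * hf
    · apply mul_right_cancel₀ (sub_ne_zero.2 h)
      linear_combination (a1 + b1) * hf - f1 * hs
  have hsum : f0 * (a0 + b0) + f1 * (a1 + b1) = r ^ 2 := by linarith
  -- `n = ‖a + b‖ ^ 2`, and `f = (r ^ 2 / n) • (a + b)`.
  set n := (a0 + b0) ^ 2 + (a1 + b1) ^ 2 with hn
  have hn0 : n ≠ 0 := by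
    intro h
    have e0 : a0 + b0 = 0 := by nlinarith [sq_nonneg (a0 + b0), sq_nonneg (a1 + b1)]
    have e1 : a1 + b1 = 0 := by nlinarith [sq_nonneg (a0 + b0), sq_nonneg (a1 + b1)]
    rw [e0, e1] at hsum
    nlinarith [pow_pos hr 2]
  have hf0 : f0 = r ^ 2 / n * (a0 + b0) := by
    field_simp
    rw [hn]; linear_combination (a1 + b1) * hpar + (a0 + b0) * hsum
  have hf1 : f1 = r ^ 2 / n * (a1 + b1) := by
    field_simp
    rw [hn]; linear_combination -(a0 + b0) * hpar + (a1 + b1) * hsum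
  have hff : f0 ^ 2 + f1 ^ 2 = r ^ 4 / n := by
    rw [hf0, hf1]
    field_simp
    rw [hn]
  rw [hff, hf0, hf1]
  field_simp
  rw [hn]
  linear_combination r ^ 4 * (2 * hp + ha + hb)

/-- The squared distance from the circumcenter of `EAB` to the center of the common circle depends
only on `P`, `E` and `r`. -/
lemma dist_sq_center {E A B F P O : EuclideanSpace ℝ (Fin 2)} {r q : ℝ} (hr : 0 < r)
    (hEA : dist E A = r) (hEB : dist E B = r) (hAB : A ≠ B)
    (hFA : dist F A = dist F E) (hFB : dist F B = dist F E)
    (hq : q = dist P E ^ 2 - r ^ 2) (hq0 : q ≠ 0)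
    (hP : (P 0 - A 0) * (P 0 - B 0) + (P 1 - A 1) * (P 1 - B 1) = 0)
    (hO : O = E + (r ^ 2 / (2 * q)) • (P - E)) :
    dist F O ^ 2 = dist O E ^ 2 - r ^ 4 / (2 * q) := by
  have ha := dist_sq_coord E A
  have hb := dist_sq_coord E B
  rw [hEA] at ha
  rw [hEB] at hb
  have hab : A 0 - E 0 ≠ B 0 - E 0 ∨ A 1 - E 1 ≠ B 1 - E 1 := by
    by_contra! h
    apply hAB
    ext i
    fin_cases i
    · simp; linarith [h.1]
    · simp; linarith [h.2]
  have key := circle_equation (p0 := P 0 - E 0) (p1 := P 1 - E 1) (by linarith) (by linarith) hab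
    (bisector_equation hEA hFA) (bisector_equation hEB hFB) hr (by linarith)
  rw [dist_sq_coord] at hq
  rw [← hq] at key
  rw [dist_sq_coord, dist_sq_coord, hO]
  simp only [PiLp.add_apply, PiLp.smul_apply, PiLp.sub_apply, smul_eq_mul]
  field_simp
  linear_combination 4 * q * key

lemma ne_of_affineIndependent {A B E : EuclideanSpace ℝ (Fin 2)}
    (h : AffineIndependent ℝ ![A, B, E]) : A ≠ B := by
  intro hAB
  have := h.injective (a₁ := 0) (a₂ := 1) (by simpa using hAB)
  simp at this

/-- Stewart's theorem for the point `P` dividing the chord `AC` of a circle about `E`. -/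
lemma dist_sq_of_chord {E A C P : EuclideanSpace ℝ (Fin 2)} {r s t : ℝ} (hEA : dist E A = r)
    (hEC : dist E C = r) (hst : s + t = 1) (hP : s • A + t • C = P) :
    dist P E ^ 2 = r ^ 2 - s * t * dist A C ^ 2 := by
  have ha := dist_sq_coord E A
  have hc := dist_sq_coord E C
  rw [hEA] at ha
  rw [hEC] at hc
  rw [dist_sq_coord, dist_sq_coord, ← hP]
  simp only [PiLp.add_apply, PiLp.smul_apply, smul_eq_mul]
  obtain rfl : s = 1 - t := by linarith
  linear_combination -(1 - t) * ha - t * hc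

/-- If `E` is the circumcenter (Steiner point) of a convex cyclic orthodiagonal
quadrilateral `ABCD` with circumradius `r`, then the circumcenters `F`, `G`,
`H`, `I` of the radial triangles form a bicentric quadrilateral:
`F`, `G`, `H`, `I` are concyclic and `E` is at distance `r / 2` from each of the
four side lines. -/
theorem circumcenter_central_quadrilateral_of_cyclic_orthodiagonal_bicentric
    (A B C D E F G H I : EuclideanSpace ℝ (Fin 2)) (r : ℝ) (hr : 0 < r)
    (hEA : dist E A = r) (hEB : dist E B = r) (hEC : dist E C = r)
    (hED : dist E D = r)
    (hconv : ∃ P : EuclideanSpace ℝ (Fin 2),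
      P ∈ openSegment ℝ A C ∧ P ∈ openSegment ℝ B D)
    (hortho : ⟪C - A, D - B⟫ = 0)
    (hABE : AffineIndependent ℝ ![A, B, E])
    (hBCE : AffineIndependent ℝ ![B, C, E])
    (hCDE : AffineIndependent ℝ ![C, D, E])
    (hDAE : AffineIndependent ℝ ![D, A, E])
    (hF : dist F A = dist F B ∧ dist F A = dist F E)
    (hG : dist G B = dist G C ∧ dist G B = dist G E)
    (hH : dist H C = dist H D ∧ dist H C = dist H E)
    (hI : dist I D = dist I A ∧ dist I D = dist I E) :
    EuclideanGeometry.Concyclic ({F, G, H, I} : Set (EuclideanSpace ℝ (Fin 2))) ∧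
    Metric.infDist E (affineSpan ℝ ({F, G} : Set (EuclideanSpace ℝ (Fin 2))) :
        Set (EuclideanSpace ℝ (Fin 2))) = r / 2 ∧
    Metric.infDist E (affineSpan ℝ ({G, H} : Set (EuclideanSpace ℝ (Fin 2))) :
        Set (EuclideanSpace ℝ (Fin 2))) = r / 2 ∧
    Metric.infDist E (affineSpan ℝ ({H, I} : Set (EuclideanSpace ℝ (Fin 2))) :
        Set (EuclideanSpace ℝ (Fin 2))) = r / 2 ∧
    Metric.infDist E (affineSpan ℝ ({I, F} : Set (EuclideanSpace ℝ (Fin 2))) :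
        Set (EuclideanSpace ℝ (Fin 2))) = r / 2 := by
  have nAB := ne_of_affineIndependent hABE
  have nBC := ne_of_affineIndependent hBCE
  have nCD := ne_of_affineIndependent hCDE
  have nDA := ne_of_affineIndependent hDAE
  have hFA := hF.2
  have hFB := hF.1.symm.trans hF.2
  have hGB := hG.2
  have hGC := hG.1.symm.trans hG.2
  have hHC := hH.2
  have hHD := hH.1.symm.trans hH.2
  have hID := hI.2
  have hIA := hI.1.symm.trans hI.2
  obtain ⟨P, ⟨s, t, hs, ht, hst, hP⟩, ⟨u, v, hu, hv, huv, hQ⟩⟩ := hconv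
  have pAC := dist_sq_of_chord hEA hEC hst hP
  have pBD := dist_sq_of_chord hEB hED huv hQ
  -- A degenerate diagonal would put `P` on the circle, so both diagonals would collapse to `P`.
  have key : s * t * dist A C ^ 2 = u * v * dist B D ^ 2 := by linarith
  have collapse : ¬ (A = C ∧ B = D) := by
    rintro ⟨rfl, rfl⟩
    apply nAB
    rw [← add_smul, hst, one_smul] at hP
    rw [← add_smul, huv, one_smul] at hQ
    rw [hP, hQ]
  have nAC : A ≠ C := by
    intro h
    refine collapse ⟨h, ?_⟩
    rw [h, dist_self] at key
    simpa [hu.ne', hv.ne'] using key.symm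
  have nBD : B ≠ D := by
    intro h
    refine collapse ⟨?_, h⟩
    rw [h, dist_self] at key
    simpa [hs.ne', ht.ne'] using key
  refine ⟨⟨?_, ?_⟩,
    infDist_side hr hEB hFB hGB (circumcenters_ne hr hEA hEB hEC nAB nBC nAC hFA hFB hGC),
    infDist_side hr hEC hGC hHC (circumcenters_ne hr hEB hEC hED nBC nCD nBD hGB hGC hHD),
    infDist_side hr hED hHD hID (circumcenters_ne hr hEC hED hEA nCD nDA nAC.symm hHC hHD hIA),
    infDist_side hr hEA hIA hFA (circumcenters_ne hr hED hEA hEB nDA nAB nBD.symm hID hIA hFB)⟩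
  · have hq0 : dist P E ^ 2 - r ^ 2 ≠ 0 := by
      have : 0 < s * t * dist A C ^ 2 := by
        have := dist_pos.2 nAC
        positivity
      linarith [this]
    have ho : (C 0 - A 0) * (D 0 - B 0) + (C 1 - A 1) * (D 1 - B 1) = 0 := by
      have := hortho
      simp only [PiLp.inner_apply, Fin.sum_univ_two, PiLp.sub_apply, RCLike.inner_apply,
        conj_trivial] at this
      linarith
    have hP0 : P 0 = s * A 0 + t * C 0 := by rw [← hP]; simp
    have hP1 : P 1 = s * A 1 + t * C 1 := by rw [← hP]; simp
    have hQ0 : P 0 = u * B 0 + v * D 0 := by rw [← hQ]; simp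
    have hQ1 : P 1 = u * B 1 + v * D 1 := by rw [← hQ]; simp
    obtain rfl : s = 1 - t := by linarith
    obtain rfl : u = 1 - v := by linarith
    have a0 : P 0 - A 0 = t * (C 0 - A 0) := by linarith
    have a1 : P 1 - A 1 = t * (C 1 - A 1) := by linarith
    have b0 : P 0 - B 0 = v * (D 0 - B 0) := by linarith
    have b1 : P 1 - B 1 = v * (D 1 - B 1) := by linarith
    have c0 : P 0 - C 0 = -(1 - t) * (C 0 - A 0) := by linarith
    have c1 : P 1 - C 1 = -(1 - t) * (C 1 - A 1) := by linarith
    have d0 : P 0 - D 0 = -(1 - v) * (D 0 - B 0) := by linarith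
    have d1 : P 1 - D 1 = -(1 - v) * (D 1 - B 1) := by linarith
    have oAB : (P 0 - A 0) * (P 0 - B 0) + (P 1 - A 1) * (P 1 - B 1) = 0 := by
      rw [a0, a1, b0, b1]; linear_combination t * v * ho
    have oBC : (P 0 - B 0) * (P 0 - C 0) + (P 1 - B 1) * (P 1 - C 1) = 0 := by
      rw [b0, b1, c0, c1]; linear_combination -(1 - t) * v * ho
    have oCD : (P 0 - C 0) * (P 0 - D 0) + (P 1 - C 1) * (P 1 - D 1) = 0 := by
      rw [c0, c1, d0, d1]; linear_combination (1 - t) * (1 - v) * ho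
    have oDA : (P 0 - D 0) * (P 0 - A 0) + (P 1 - D 1) * (P 1 - A 1) = 0 := by
      rw [d0, d1, a0, a1]; linear_combination -t * (1 - v) * ho
    obtain ⟨O, hO⟩ : ∃ O, O = E + (r ^ 2 / (2 * (dist P E ^ 2 - r ^ 2))) • (P - E) := ⟨_, rfl⟩
    have kF := dist_sq_center hr hEA hEB nAB hFA hFB rfl hq0 oAB hO
    have kG := dist_sq_center hr hEB hEC nBC hGB hGC rfl hq0 oBC hO
    have kH := dist_sq_center hr hEC hED nCD hHC hHD rfl hq0 oCD hO
    have kI := dist_sq_center hr hED hEA nDA hID hIA rfl hq0 oDA hO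
    refine ⟨O, dist F O, ?_⟩
    rintro X (rfl | rfl | rfl | rfl)
    · exact rfl
    · exact (sq_eq_sq₀ dist_nonneg dist_nonneg).1 (kG.trans kF.symm)
    · exact (sq_eq_sq₀ dist_nonneg dist_nonneg).1 (kH.trans kF.symm)
    · exact (sq_eq_sq₀ dist_nonneg dist_nonneg).1 (kI.trans kF.symm)
  · exact coplanar_of_finrank_eq_two _ (by simp)
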